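/- For every y ∈ W_{H*}, one has b⁻¹ y* b = w_{H*} y w_{H*}. In particular the map ε : y ↦ b⁻¹ y* b maps W_{H*} to itself and coincides with conjugation by the longest element w_{H*}. -/

import Mathlib

set_option synthInstance.maxHeartbeats 1000000
set_option maxHeartbeats 2000000

open scoped Classical

noncomputable section

namespace LY

/-! ## The coefficient field `ℚ(q)` -/

/-- The field `ℚ(q)` of rational functions. -/
abbrev K : Type := RatFunc ℚ

/-- The indeterminate `q`. -/
def qK : K := RatFunc.X

/-- The inclusion `ℤ[q] → ℚ(q)`. -/
def toK (p : Polynomial ℤ) : K := algebraMap (Polynomial ℚ) K (p.map (Int.castRingHom ℚ))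

/-- Evaluation of `p ∈ ℤ[q]` at `−q`, as an element of `ℚ(q)`; i.e. `p(−q)`. -/
def atNegQ (p : Polynomial ℤ) : K := Polynomial.eval₂ (Int.castRingHom K) (-qK) p

/-- The standard basis element `T_w` (resp. `a_w`) of the function model `W → ℚ(q)`
of the Hecke algebra (resp. of the Lusztig–Vogan module `M`). -/
def TT {W : Type} (w : W) : W → K := fun y => if y = w then 1 else 0

variable {B W : Type} [Group W] {M : CoxeterMatrix B}

/-- The Bruhat order on a Coxeter group: `u ≤ v` iff `v` is obtained from `u` by successive
right multiplications by reflections, each increasing the length. -/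
def BruhatLE (cs : CoxeterSystem M W) (u v : W) : Prop :=
  Relation.ReflTransGen
    (fun a b => cs.length a < cs.length b ∧ ∃ t, cs.IsReflection t ∧ b = a * t) u v

/-- Connectedness of the Coxeter diagram of `M`. -/
def DiagramConnected (M : CoxeterMatrix B) : Prop :=
  ∀ i j : B, Relation.ReflTransGen (fun a b => a ≠ b ∧ M a b ≠ 2) i j

/-- An automorphism of `W` preserving the set `S` of simple reflections, i.e. an element
of `A = Aut(W,S)`. -/
def IsDiagAut (cs : CoxeterSystem M W) (a : MulAut W) : Prop :=
  (⇑a) '' (Set.range cs.simple) = Set.range cs.simple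

/-! ## The affine setting -/

/-- All the data and axioms describing the setting: `(W,S)` is the Coxeter group of an
untwisted connected affine Dynkin diagram (an irreducible affine Weyl group); `Λ` is the
subgroup of translations (elements with finite conjugacy class), free abelian of finite
rank and of finite index; `s₀` is a hyperspecial vertex, `J = S − {s₀}`, `W_J` is the
finite subgroup generated by `J` with longest element `w_J`; `*` is the involution of `W`
given by `w* = w_J w w_J` on `W_J` and `λ* = −(ʷᴶλ)` on `Λ`; `pr` is the projection
`W → W_J` along `Λ`; `ρ` is the conjugation action of `W` on `Λ_ℚ ≅ ℚ^rank`
(via the identification `freeIso` of `Λ` with `ℤ^rank`). -/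
structure AffineData (cs : CoxeterSystem M W) where
  finB : Finite B
  conn : DiagramConnected M
  infW : Infinite W
  /-- the subgroup `Λ` of translations -/
  Lam : Subgroup W
  hLam_mem : ∀ w : W, w ∈ Lam ↔ {x : W | IsConj w x}.Finite
  hLam_normal : Lam.Normal
  hLam_comm : ∀ a ∈ Lam, ∀ b ∈ Lam, a * b = b * a
  hLam_index : Lam.FiniteIndex
  /-- `Λ` is free abelian of finite rank -/
  rank : ℕ
  freeIso : Lam ≃* Multiplicative (Fin rank → ℤ)
  /-- the hyperspecial vertex `s₀` -/
  s0 : W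
  hs0_S : s0 ∈ Set.range cs.simple
  /-- `s₀` is hyperspecial: the projection `W → W/Λ` restricts to an isomorphism from the
  subgroup generated by `S − {s₀}` onto `W/Λ`. -/
  hs0_hyper : ∀ w : W, ∃! u : W,
    u ∈ Subgroup.closure (Set.range cs.simple \ {s0}) ∧ w * u⁻¹ ∈ Lam
  hWJ_fin : (Subgroup.closure (Set.range cs.simple \ {s0}) : Set W).Finite
  /-- the longest element `w_J` of `W_J` -/
  wJ : W
  hwJ_mem : wJ ∈ Subgroup.closure (Set.range cs.simple \ {s0})
  hwJ_max : ∀ u ∈ Subgroup.closure (Set.range cs.simple \ {s0}), cs.length u ≤ cs.length wJ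
  /-- the involution `*` of `W` -/
  st : MulAut W
  hst_inv : ∀ w : W, st (st w) = w
  hst_J : ∀ u ∈ Subgroup.closure (Set.range cs.simple \ {s0}), st u = wJ * u * wJ
  hst_Lam : ∀ l ∈ Lam, st l = (wJ * l * wJ⁻¹)⁻¹
  hst_S : ∀ s ∈ Set.range cs.simple, st s ∈ Set.range cs.simple
  /-- lower Bruhat intervals are finite -/
  hBruhat_fin : ∀ w : W, {y : W | BruhatLE cs y w}.Finite
  /-- the projection `W → W_J` along `Λ` (`w ↦ w̄`) -/
  pr : W → W
  hpr : ∀ w : W, pr w ∈ Subgroup.closure (Set.range cs.simple \ {s0}) ∧ w * (pr w)⁻¹ ∈ Lam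
  /-- the conjugation action of `W` on `Λ_ℚ ≅ ℚ^rank` -/
  rho : W → ((Fin rank → ℚ) →ₗ[ℚ] (Fin rank → ℚ))
  hrho : ∀ (w : W) (l : Lam),
    rho w (fun i => ((Multiplicative.toAdd (freeIso l)) i : ℚ)) =
      fun i => ((Multiplicative.toAdd
        (freeIso ⟨w * (l : W) * w⁻¹, hLam_normal.conj_mem _ l.2 w⟩)) i : ℚ)

namespace AffineData

variable {cs : CoxeterSystem M W} (D : AffineData cs)

/-- The set `J = S − {s₀}`. -/
def Jset : Set W := Set.range cs.simple \ {D.s0}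

/-- The finite Weyl group `W_J`. -/
def WJ : Subgroup W := Subgroup.closure D.Jset

/-- `λ ∈ Λ` is a dominant translation (`λ ∈ Λ⁺`). -/
def IsDominant (l : W) : Prop :=
  l ∈ D.Lam ∧ cs.length (l * D.wJ) = cs.length l + cs.length D.wJ

/-- The embedding `Λ → Λ_ℚ = ℚ^rank`. -/
def iota (l : D.Lam) : Fin D.rank → ℚ :=
  fun i => ((Multiplicative.toAdd (D.freeIso l)) i : ℚ)

/-- `e(A)`: the dimension of the `(−1)`-eigenspace of a linear endomorphism `A` of `Λ_ℚ`. -/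
def eNeg (f : (Fin D.rank → ℚ) →ₗ[ℚ] (Fin D.rank → ℚ)) : ℕ :=
  Module.finrank ℚ (Module.End.eigenspace (f : Module.End ℚ (Fin D.rank → ℚ)) (-1))

/-- The map `A_u : λ ↦ ᵘ(λ*) = −(ᵘʷᴶλ)` on `Λ_ℚ`, for `u ∈ W_J`. -/
def Amap (u : W) : (Fin D.rank → ℚ) →ₗ[ℚ] (Fin D.rank → ℚ) := - D.rho (u * D.wJ)

/-- The invariant `φ(w) = e(A_{w̄}) − e(A_e)` for `w ∈ I_*`. -/
def phi (w : W) : ℤ := (D.eNeg (D.Amap (D.pr w)) : ℤ) - (D.eNeg (D.Amap 1) : ℤ)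

/-- The double coset `W_J x W_J`. -/
def DCoset (x : W) : Set W := {y : W | ∃ u ∈ D.WJ, ∃ v ∈ D.WJ, y = u * x * v}

/-- The set `H = J ∩ bJb⁻¹`. -/
def Hset (b : W) : Set W := D.Jset ∩ ((fun s => b * s * b⁻¹) '' D.Jset)

/-- The set `H* ⊆ J`, image of `H` under `*`. -/
def Hstar (b : W) : Set W := (⇑D.st) '' D.Hset b

/-- The subgroup `W_{H*}` generated by `H*`. -/
def WHstar (b : W) : Subgroup W := Subgroup.closure (D.Hstar b)

/-- The reflection representation `R'` of `W_{H*}`, as a subspace of `Λ_ℚ`: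
the span of the vectors `λ − ˢλ` for `λ ∈ Λ`, `s ∈ H*`. -/
def Rprime (b : W) : Submodule ℚ (Fin D.rank → ℚ) :=
  Submodule.span ℚ
    {v : Fin D.rank → ℚ | ∃ l : D.Lam, ∃ s ∈ D.Hstar b,
      v = D.iota l - D.iota ⟨s * (l : W) * s⁻¹, D.hLam_normal.conj_mem _ l.2 s⟩}

/-- `e'(A)`: the dimension of the `(−1)`-eigenspace of an endomorphism `A` of `R'`. -/
def eNeg' {b : W} (f : ↥(D.Rprime b) →ₗ[ℚ] ↥(D.Rprime b)) : ℕ :=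
  Module.finrank ℚ (Module.End.eigenspace (f : Module.End ℚ ↥(D.Rprime b)) (-1))

/-- `φ'(z) = e'(B_z) − e'(B_e)`, where `B_u : x ↦ −u·(w_{H*}·x)` on `R'`; here
`rho'` is the conjugation action of `W_{H*}` on `R'` and `wHs` is the longest element
of `W_{H*}`. -/
def phiP {b : W} (rho' : W → (↥(D.Rprime b) →ₗ[ℚ] ↥(D.Rprime b))) (wHs z : W) : ℤ :=
  (D.eNeg' (-(rho' (z * wHs))) : ℤ) - (D.eNeg' (-(rho' wHs)) : ℤ)

/-- Membership in `A_Λ ⊆ A = Aut(W,S)`: automorphisms acting on `Λ` as conjugation by some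
element of `W_J`. -/
def InALam (a : MulAut W) : Prop :=
  IsDiagAut cs a ∧ ∃ w ∈ D.WJ, ∀ l ∈ D.Lam, a l = w * l * w⁻¹

/-- Membership in the coset `A_Λ* = {a ∘ * : a ∈ A_Λ}`. -/
def InALamStar (c : MulAut W) : Prop := ∃ a : MulAut W, D.InALam a ∧ c = a * D.st

/-- The double coset `W_J x W_J^◇`, where `W_J^◇` is the subgroup generated by
`J^◇ = S − {s₁}`. -/
def DCosetDia (s1 : W) (x : W) : Set W :=
  {y : W | ∃ u ∈ D.WJ, ∃ v ∈ Subgroup.closure (Set.range cs.simple \ {s1}), y = u * x * v}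


end AffineData

/-! ## The Hecke algebra, the Lusztig–Vogan module, and the polynomials `P`, `P^σ` -/

/-- The Hecke algebra of `(W,S)` over `ℚ(q)` (modelled on functions `W → ℚ(q)`, with basis
`TT w = T_w`), together with its bar involution, and the Kazhdan–Lusztig polynomials
`P_{y,w} ∈ ℤ[q]` characterized by their defining properties. -/
structure HeckeData (cs : CoxeterSystem M W) where
  /-- the involution `q ↦ q⁻¹` of `ℚ(q)` -/
  barK : K →+* K
  hbarK_X : barK qK = qK⁻¹
  hbarK_inv : ∀ x, barK (barK x) = x
  /-- the multiplication of the Hecke algebra -/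
  mulH : (W → K) →ₗ[K] (W → K) →ₗ[K] (W → K)
  hmul_assoc : ∀ x y z : W → K, mulH (mulH x y) z = mulH x (mulH y z)
  hmul_one : ∀ x : W → K, mulH (TT 1) x = x ∧ mulH x (TT 1) = x
  hmul_TT : ∀ u v : W, cs.length (u * v) = cs.length u + cs.length v →
    mulH (TT u) (TT v) = TT (u * v)
  hmul_Ts : ∀ s ∈ Set.range cs.simple,
    mulH (TT s) (TT s) = (qK - 1) • TT s + qK • TT (1 : W)
  /-- the bar involution of the Hecke algebra: the ring involution with `q ↦ q⁻¹`,
  `T_w ↦ (T_{w⁻¹})⁻¹` -/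
  barH : (W → K) →+ (W → K)
  hbarH_inv : ∀ x, barH (barH x) = x
  hbarH_smul : ∀ (c : K) (x : W → K), barH (c • x) = barK c • barH x
  hbarH_mul : ∀ x y : W → K, barH (mulH x y) = mulH (barH x) (barH y)
  hbarH_T : ∀ w : W, mulH (barH (TT w)) (TT w⁻¹) = TT (1 : W) ∧
    mulH (TT w⁻¹) (barH (TT w)) = TT (1 : W)
  /-- the Kazhdan–Lusztig polynomials `P_{y,w}` -/
  P : W → W → Polynomial ℤ
  hP_supp : ∀ y w : W, ¬ BruhatLE cs y w → P y w = 0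
  hP_diag : ∀ w : W, P w w = 1
  hP_deg : ∀ y w : W, BruhatLE cs y w → y ≠ w →
    2 * (P y w).natDegree + 1 ≤ cs.length w - cs.length y
  hP_dual : ∀ w : W,
    (qK ^ cs.length w) • barH (fun y => if BruhatLE cs y w then toK (P y w) else 0)
      = fun y => if BruhatLE cs y w then toK (P y w) else 0

/-- The Lusztig–Vogan module `M` over the Hecke algebra `H'` with parameter `q²`, attached to
a length-preserving involutive automorphism `star` of `(W,S)`, together with its bar
involution, and the polynomials `P^σ_{y,w} ∈ ℤ[q]` (for `y, w ∈ I_*`) characterized by their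
defining properties.  Both `H'` and `M` are modelled on functions `W → ℚ(q)`; the basis
element `a_w` of `M` (for `w ∈ I_*`) is `TT w`. -/
structure LVData (cs : CoxeterSystem M W) (star : MulAut W) where
  /-- the involution `q ↦ q⁻¹` of `ℚ(q)` -/
  barK : K →+* K
  hbarK_X : barK qK = qK⁻¹
  hbarK_inv : ∀ x, barK (barK x) = x
  /-- the multiplication of the Hecke algebra `H'` with parameter `q²` -/
  mulH' : (W → K) →ₗ[K] (W → K) →ₗ[K] (W → K)
  hmul'_assoc : ∀ x y z : W → K, mulH' (mulH' x y) z = mulH' x (mulH' y z)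
  hmul'_one : ∀ x : W → K, mulH' (TT 1) x = x ∧ mulH' x (TT 1) = x
  hmul'_TT : ∀ u v : W, cs.length (u * v) = cs.length u + cs.length v →
    mulH' (TT u) (TT v) = TT (u * v)
  hmul'_Ts : ∀ s ∈ Set.range cs.simple,
    mulH' (TT s) (TT s) = (qK ^ 2 - 1) • TT s + (qK ^ 2) • TT (1 : W)
  /-- the bar involution of `H'` -/
  barH' : (W → K) →+ (W → K)
  hbarH'_inv : ∀ x, barH' (barH' x) = x
  hbarH'_smul : ∀ (c : K) (x : W → K), barH' (c • x) = barK c • barH' x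
  hbarH'_mul : ∀ x y : W → K, barH' (mulH' x y) = mulH' (barH' x) (barH' y)
  hbarH'_T : ∀ w : W, mulH' (barH' (TT w)) (TT w⁻¹) = TT (1 : W) ∧
    mulH' (TT w⁻¹) (barH' (TT w)) = TT (1 : W)
  /-- the action of `H'` on the module `M` -/
  actM : (W → K) →ₗ[K] (W → K) →ₗ[K] (W → K)
  hact_one : ∀ m : W → K, actM (TT 1) m = m
  hact_mul : ∀ (h h' : W → K) (m : W → K), actM (mulH' h h') m = actM h (actM h' m)
  hact1 : ∀ s ∈ Set.range cs.simple, ∀ w : W, star w = w⁻¹ →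
    s * w = w * star s → cs.length w < cs.length (s * w) →
    actM (TT s) (TT w) = qK • TT w + (qK + 1) • TT (s * w)
  hact2 : ∀ s ∈ Set.range cs.simple, ∀ w : W, star w = w⁻¹ →
    s * w = w * star s → cs.length (s * w) < cs.length w →
    actM (TT s) (TT w) = (qK ^ 2 - qK - 1) • TT w + (qK ^ 2 - qK) • TT (s * w)
  hact3 : ∀ s ∈ Set.range cs.simple, ∀ w : W, star w = w⁻¹ →
    s * w ≠ w * star s → cs.length w < cs.length (s * w) →
    actM (TT s) (TT w) = TT (s * w * star s)
  hact4 : ∀ s ∈ Set.range cs.simple, ∀ w : W, star w = w⁻¹ →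
    s * w ≠ w * star s → cs.length (s * w) < cs.length w →
    actM (TT s) (TT w) = (qK ^ 2 - 1) • TT w + (qK ^ 2) • TT (s * w * star s)
  /-- the bar involution of the module `M` -/
  barM : (W → K) →+ (W → K)
  hbarM_inv : ∀ m : W → K, barM (barM m) = m
  hbarM_smul : ∀ (c : K) (m : W → K), barM (c • m) = barK c • barM m
  hbarM_act : ∀ (h m : W → K), barM (actM h m) = actM (barH' h) (barM m)
  hbarM_one : barM (TT 1) = TT (1 : W)
  /-- the Lusztig–Vogan polynomials `P^σ_{y,w}` -/
  Psig : W → W → Polynomial ℤ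
  hPsig_supp : ∀ y w : W, ¬ (BruhatLE cs y w ∧ star y = y⁻¹) → Psig y w = 0
  hPsig_diag : ∀ w : W, star w = w⁻¹ → Psig w w = 1
  hPsig_deg : ∀ y w : W, star w = w⁻¹ → star y = y⁻¹ → BruhatLE cs y w → y ≠ w →
    2 * (Psig y w).natDegree + 1 ≤ cs.length w - cs.length y
  hPsig_dual : ∀ w : W, star w = w⁻¹ →
    (qK ^ (2 * cs.length w)) •
        barM (fun y => if BruhatLE cs y w ∧ star y = y⁻¹ then toK (Psig y w) else 0)
      = fun y => if BruhatLE cs y w ∧ star y = y⁻¹ then toK (Psig y w) else 0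

/-! ## The `Z`-polynomials -/

/-- `Z_w(q) = Σ_{y ≤ w} P_{y,w}(q) q^{ℓ(y)}`. -/
def Zpoly (cs : CoxeterSystem M W) (HD : HeckeData cs) (w : W) : K :=
  ∑ᶠ y : W, if BruhatLE cs y w then toK (HD.P y w) * qK ^ cs.length y else 0

/-- `Z_w(−q) = Σ_{y ≤ w} P_{y,w}(−q) (−q)^{ℓ(y)}`. -/
def ZpolyNeg (cs : CoxeterSystem M W) (HD : HeckeData cs) (w : W) : K :=
  ∑ᶠ y : W, if BruhatLE cs y w then atNegQ (HD.P y w) * (-qK) ^ cs.length y else 0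

/-- `Z^σ_w(q) = Σ_{y ≤ w, y ∈ I_*} P^σ_{y,w}(q) q^{ℓ(y)} ((q−1)/(q+1))^{φ(y)}`. -/
def Zsig (cs : CoxeterSystem M W) (D : AffineData cs) (LD : LVData cs D.st) (w : W) : K :=
  ∑ᶠ y : W, if BruhatLE cs y w ∧ D.st y = y⁻¹ then
    toK (LD.Psig y w) * qK ^ cs.length y * ((qK - 1) / (qK + 1)) ^ D.phi y else 0

/-!
Let `ℓ` be the length function and `μ` the given dominant translation. Dominance makes `μ` shortest
in `μ W_J`, so `μ = v b` with `v ∈ W_J`. Applying `*`, and using `μ* = w_J μ⁻¹ w_J` and `b* = b⁻¹`,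
gives `w_J μ = b y` with `y = w_J v⁻¹`. Thus `b y b⁻¹ = w_J v` lies in `W_J`, and Kilmoyer's theorem
puts `y` in `W_{H*}`. Comparing `ℓ(μ u)` with `ℓ(w_J) + ℓ(b)` for `u ∈ W_{H*}` shows that `y` is a
longest element of `W_{H*}`, that is, `y = w_{H*}`. Now `b = w_J μ w_{H*}`, so
`b⁻¹ z* b = w_{H*} (μ⁻¹ z μ) w_{H*}` for `z ∈ W_{H*}`. Finally `μ⁻¹ z μ` and `z` both lie in `W_J`
and agree modulo `Λ`, hence they are equal.
-/

open CoxeterSystem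

section CoxeterGroup

variable {B W : Type*} [Group W] {M : CoxeterMatrix B} {cs : CoxeterSystem M W}

/-! ### The exchange condition -/

section Exchange

theorem prod_map_alternatingWord {G : Type*} [Monoid G] (f : B → G) (i j : B) (m : ℕ) :
    ((alternatingWord i j (2 * m)).map f).prod = (f i * f j) ^ m := by
  induction m with
  | zero => simp [alternatingWord]
  | succ m ih =>
    rw [mul_add_one, alternatingWord_succ, alternatingWord_succ]
    simp [ih, pow_succ]

theorem reverse_alternatingWord_two_mul (i j : B) (m : ℕ) :
    (alternatingWord i j (2 * m)).reverse = alternatingWord j i (2 * m) := by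
  induction m with
  | zero => simp [alternatingWord]
  | succ m ih =>
    rw [mul_add_one, alternatingWord_succ, alternatingWord_succ, alternatingWord_succ',
      alternatingWord_succ']
    simp [ih, parity_simps]

/-- Since `(sᵢ sⱼ) ^ M i j = 1`, the inversion sequence of this word is periodic and consists of two
periods. -/
theorem even_count_rightInvSeq_alternatingWord (i j : B) (x : W) :
    Even ((cs.rightInvSeq (alternatingWord i j (2 * M i j))).count x) := by
  let period := (List.range (M i j)).map fun k => cs.wordProd (alternatingWord i j (2 * k + 1))
  have h : cs.leftInvSeq (alternatingWord j i (2 * M i j)) = period ++ period := by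
    refine List.ext_getElem (by simp [period, two_mul]) fun k hk _ => ?_
    have hk' : k < 2 * M i j := by simpa using hk
    rw [cs.getElem_leftInvSeq_alternatingWord j i _ k hk', List.getElem_append]
    split_ifs with hlt
    · simp [period]
    · obtain ⟨l, rfl⟩ := Nat.exists_eq_add_of_le (show M i j ≤ k by simpa [period] using hlt)
      have hodd (n : ℕ) : (2 * n + 1) / 2 = n := by lia
      simp [period, prod_alternatingWord_eq_mul_pow, hodd, pow_add]
  rw [← reverse_alternatingWord_two_mul, rightInvSeq_reverse, List.count_reverse, h,
    List.count_append]
  exact Even.add_self _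

theorem involutive_signedConj (cs : CoxeterSystem M W) (i : B) :
    Function.Involutive fun p : W × ZMod 2 =>
      (cs.simple i * p.1 * cs.simple i, p.2 + if p.1 = cs.simple i then 1 else 0) := by
  rintro ⟨x, e⟩
  have h : cs.simple i * x * cs.simple i = cs.simple i ↔ x = cs.simple i := by
    rw [mul_eq_right, mul_eq_one_iff_eq_inv', inv_simple]
  ext1
  · simp [mul_assoc]
  · simp [h, add_assoc, CharTwo.add_self_eq_zero]

/-- The action of the simple reflection `sᵢ` on `W × ℤ/2`: conjugation on `W`, together with a sign
change at `sᵢ` itself. The resulting action of `W` counts inversions modulo 2. -/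
def signedConj (cs : CoxeterSystem M W) (i : B) : Equiv.Perm (W × ZMod 2) :=
  (involutive_signedConj cs i).toPerm

theorem prod_map_signedConj_apply (ω : List B) (x : W) (e : ZMod 2) :
    (ω.map (signedConj cs)).prod (x, e) =
      (cs.wordProd ω * x * (cs.wordProd ω)⁻¹, e + (cs.rightInvSeq ω).count x) := by
  induction ω with
  | nil => simp
  | cons i ω ih =>
    have h : cs.wordProd ω * x * (cs.wordProd ω)⁻¹ = cs.simple i ↔
        (cs.wordProd ω)⁻¹ * cs.simple i * cs.wordProd ω = x := by
      constructor <;> rintro h <;> rw [← h] <;> group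
    rw [List.map_cons, List.prod_cons, Equiv.Perm.mul_apply, ih]
    ext1
    · simp [signedConj, wordProd_cons, mul_assoc]
    · simp [signedConj, rightInvSeq, List.count_cons, h, add_assoc]

theorem isLiftable_signedConj (cs : CoxeterSystem M W) : M.IsLiftable (signedConj cs) := by
  intro i j
  refine Equiv.ext fun ⟨x, e⟩ => ?_
  rw [← prod_map_alternatingWord, prod_map_signedConj_apply, prod_alternatingWord_eq_mul_pow,
    (ZMod.natCast_eq_zero_iff_even).2 (even_count_rightInvSeq_alternatingWord i j x)]
  simp

/-- The action of `W` on `W × ℤ/2` extending `signedConj`. -/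
def signedConjHom (cs : CoxeterSystem M W) : W →* Equiv.Perm (W × ZMod 2) :=
  cs.lift ⟨signedConj cs, isLiftable_signedConj cs⟩

theorem signedConjHom_wordProd_apply (ω : List B) (x : W) (e : ZMod 2) :
    signedConjHom cs (cs.wordProd ω) (x, e) =
      (cs.wordProd ω * x * (cs.wordProd ω)⁻¹, e + (cs.rightInvSeq ω).count x) := by
  have h : ⇑(signedConjHom cs) ∘ cs.simple = signedConj cs :=
    funext (cs.lift_apply_simple (isLiftable_signedConj cs))
  rw [← prod_map_signedConj_apply, wordProd, map_list_prod, List.map_map, h]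

theorem exists_signedConjHom_apply (w x : W) :
    ∃ c : ZMod 2, ∀ e, signedConjHom cs w (x, e) = (w * x * w⁻¹, e + c) := by
  obtain ⟨ω, rfl⟩ := cs.wordProd_surjective w
  exact ⟨_, signedConjHom_wordProd_apply ω x⟩

theorem signedConjHom_apply_self {t : W} (ht : cs.IsReflection t) (e : ZMod 2) :
    signedConjHom cs t (t, e) = (t, e + 1) := by
  obtain ⟨w, i, rfl⟩ := ht
  set t := w * cs.simple i * w⁻¹
  obtain ⟨c, hc⟩ := exists_signedConjHom_apply (cs := cs) w⁻¹ t
  obtain ⟨c', hc'⟩ := exists_signedConjHom_apply (cs := cs) w (cs.simple i)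
  have hconj : w⁻¹ * t * w⁻¹⁻¹ = cs.simple i := by simp only [t]; group
  have hsimple (e : ZMod 2) :
      signedConjHom cs (cs.simple i) (cs.simple i, e) = (cs.simple i, e + 1) := by
    simpa using signedConjHom_wordProd_apply (cs := cs) [i] (cs.simple i) e
  have hcancel : c + c' = 0 := by
    have h : signedConjHom cs (w * w⁻¹) (t, 0) = (t, 0) := by simp
    rw [map_mul, Equiv.Perm.mul_apply, hc, hconj, hc'] at h
    simpa using congrArg Prod.snd h
  rw [show signedConjHom cs t = signedConjHom cs w * signedConjHom cs (cs.simple i) *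
      signedConjHom cs w⁻¹ by simp only [t, map_mul]]
  simp only [Equiv.Perm.mul_apply, hc, hconj, hsimple, hc']
  exact Prod.ext rfl (by linear_combination hcancel)

/-- The strong exchange condition: the action on `W × ℤ/2` shows that the parity of the number of
occurrences of `t` in `rightInvSeq ω` depends only on `wordProd ω`. -/
theorem mem_rightInvSeq_of_isRightInversion {ω : List B} {t : W}
    (h : cs.IsRightInversion (cs.wordProd ω) t) : t ∈ cs.rightInvSeq ω := by
  by_contra hω
  obtain ⟨ht, hlt⟩ := h
  obtain ⟨ω', hred, hω'⟩ := cs.exists_isReduced (cs.wordProd ω * t)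
  have ht' : t ∉ cs.rightInvSeq ω' := fun hmem => by
    have hlt' := (cs.isRightInversion_of_mem_rightInvSeq hred hmem).2
    rw [← hω', mul_assoc, ht.mul_self, mul_one] at hlt'
    exact hlt.not_gt hlt'
  have hword := signedConjHom_wordProd_apply (cs := cs) ω t 0
  rw [show cs.wordProd ω = cs.wordProd ω' * t by rw [← hω', mul_assoc, ht.mul_self, mul_one],
    map_mul, Equiv.Perm.mul_apply, signedConjHom_apply_self ht,
    signedConjHom_wordProd_apply, List.count_eq_zero_of_not_mem hω,
    List.count_eq_zero_of_not_mem ht'] at hword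
  simpa using congrArg Prod.snd hword

theorem exists_wordProd_mul_eq_eraseIdx {ω : List B} {t : W}
    (h : cs.IsRightInversion (cs.wordProd ω) t) :
    ∃ j < ω.length, cs.wordProd ω * t = cs.wordProd (ω.eraseIdx j) := by
  obtain ⟨j, hj, rfl⟩ := List.mem_iff_getElem.mp (mem_rightInvSeq_of_isRightInversion h)
  refine ⟨j, by simpa using hj, ?_⟩
  rw [← cs.wordProd_mul_getD_rightInvSeq, List.getD_eq_getElem _ 1 hj]

theorem length_wordProd_eraseIdx_lt {ω : List B} {j : ℕ} (hj : j < ω.length) :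
    cs.length (cs.wordProd (ω.eraseIdx j)) < ω.length := by
  have := cs.length_wordProd_le (ω.eraseIdx j)
  have := List.length_eraseIdx_add_one hj
  lia

theorem isRightInversion_or_exists_eraseIdx {ω : List B} {g t : W}
    (h : cs.IsRightInversion (cs.wordProd ω * g) t) :
    cs.IsRightInversion g t ∨
      ∃ j < ω.length, cs.wordProd ω * g * t = cs.wordProd (ω.eraseIdx j) * g := by
  obtain ⟨ω', hred, rfl⟩ := cs.exists_isReduced g
  rw [← cs.wordProd_append] at h
  obtain ⟨j, hj, heq⟩ := exists_wordProd_mul_eq_eraseIdx h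
  rw [wordProd_append] at heq
  obtain hlt | hge := lt_or_ge j ω.length
  · rw [List.eraseIdx_append_of_lt_length hlt, wordProd_append] at heq
    exact .inr ⟨j, hlt, heq⟩
  · rw [List.eraseIdx_append_of_length_le hge, wordProd_append, mul_assoc, mul_right_inj] at heq
    refine .inl ⟨h.1, ?_⟩
    rw [heq, hred.eq]
    exact length_wordProd_eraseIdx_lt (by rw [List.length_append] at hj; lia)

end Exchange

/-! ### Parabolic subgroups -/

section Parabolic

variable {X : Set W}

theorem wordProd_mem_closure {ω : List B} (hω : ∀ i ∈ ω, cs.simple i ∈ X) :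
    cs.wordProd ω ∈ Subgroup.closure X := by
  refine Subgroup.list_prod_mem _ fun s hs => ?_
  obtain ⟨i, hi, rfl⟩ := List.mem_map.mp hs
  exact Subgroup.subset_closure (hω i hi)

theorem exists_isReduced_wordProd_mul_simple {ω : List B} (hω : ∀ i ∈ ω, cs.simple i ∈ X)
    (hred : cs.IsReduced ω) {i : B} (hi : cs.simple i ∈ X) :
    ∃ ω' : List B, cs.IsReduced ω' ∧ cs.wordProd ω * cs.simple i = cs.wordProd ω' ∧
      ∀ k ∈ ω', cs.simple k ∈ X := by
  obtain hlong | hshort := cs.length_mul_simple (cs.wordProd ω) i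
  · have happend : cs.wordProd ω * cs.simple i = cs.wordProd (ω ++ [i]) := by
      rw [wordProd_append, wordProd_singleton]
    refine ⟨ω ++ [i], ?_, happend, by simpa [or_imp, forall_and] using ⟨hω, hi⟩⟩
    rw [CoxeterSystem.IsReduced, ← happend, hlong, hred.eq, List.length_append,
      List.length_singleton]
  · obtain ⟨j, hj, heq⟩ := exists_wordProd_mul_eq_eraseIdx (cs := cs) (ω := ω)
      ⟨cs.isReflection_simple i, by lia⟩
    refine ⟨ω.eraseIdx j, ?_, heq, fun k hk => hω k (List.mem_of_mem_eraseIdx hk)⟩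
    have := List.length_eraseIdx_add_one hj
    rw [CoxeterSystem.IsReduced, ← heq]
    rw [hred.eq] at hshort
    lia

theorem exists_isReduced_of_mem_closure (hX : X ⊆ Set.range cs.simple) {u : W}
    (hu : u ∈ Subgroup.closure X) :
    ∃ ω : List B, cs.IsReduced ω ∧ u = cs.wordProd ω ∧ ∀ i ∈ ω, cs.simple i ∈ X := by
  induction hu using Subgroup.closure_induction_right with
  | one => exact ⟨[], by simp [CoxeterSystem.IsReduced], by simp, by simp⟩
  | mul_right _ _ s hs ih =>
    obtain ⟨ω, hred, rfl, hω⟩ := ih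
    obtain ⟨i, rfl⟩ := hX hs
    exact exists_isReduced_wordProd_mul_simple hω hred hs
  | mul_inv_cancel _ _ s hs ih =>
    obtain ⟨ω, hred, rfl, hω⟩ := ih
    obtain ⟨i, rfl⟩ := hX hs
    rw [inv_simple]
    exact exists_isReduced_wordProd_mul_simple hω hred hs

theorem mem_of_mem_closure_of_length_eq_one (hX : X ⊆ Set.range cs.simple) {u : W}
    (hu : u ∈ Subgroup.closure X) (h : cs.length u = 1) : u ∈ X := by
  obtain ⟨ω, hred, rfl, hω⟩ := exists_isReduced_of_mem_closure hX hu
  obtain ⟨i, rfl⟩ := List.length_eq_one_iff.mp (hred.eq ▸ h)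
  simpa using hω i

@[elab_as_elim]
theorem parabolic_induction (hX : X ⊆ Set.range cs.simple)
    {p : (u : W) → u ∈ Subgroup.closure X → Prop} (one : p 1 (one_mem _))
    (mul_simple : ∀ (v : W) (hv : v ∈ Subgroup.closure X) (s : W) (hs : s ∈ X),
      cs.length (v * s) = cs.length v + 1 → p v hv →
        p (v * s) (mul_mem hv (Subgroup.subset_closure hs)))
    {u : W} (hu : u ∈ Subgroup.closure X) : p u hu := by
  obtain ⟨ω, hred, rfl, hω⟩ := exists_isReduced_of_mem_closure hX hu
  induction ω using List.reverseRecOn with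
  | nil => simpa only [wordProd_nil] using one
  | append_singleton ω i ih =>
    have hred' : cs.IsReduced ω := by simpa using hred.take ω.length
    have hω' : ∀ k ∈ ω, cs.simple k ∈ X := fun k hk => hω k (List.mem_append_left _ hk)
    have hlength := hred.eq
    rw [List.length_append, List.length_singleton, ← hred'.eq] at hlength
    simp only [wordProd_append, wordProd_singleton] at hlength ⊢
    have hv := wordProd_mem_closure hω'
    exact mul_simple _ hv _ (hω i (by simp)) hlength (ih hred' hω' hv)

theorem isRightInversion_or_exists_mem_closure (hX : X ⊆ Set.range cs.simple) {u g t : W}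
    (hu : u ∈ Subgroup.closure X) (h : cs.IsRightInversion (u * g) t) :
    cs.IsRightInversion g t ∨
      ∃ u' ∈ Subgroup.closure X, cs.length u' < cs.length u ∧ u * g * t = u' * g := by
  obtain ⟨ω, hred, rfl, hω⟩ := exists_isReduced_of_mem_closure hX hu
  refine (isRightInversion_or_exists_eraseIdx h).imp_right fun ⟨j, hj, heq⟩ => ?_
  exact ⟨_, wordProd_mem_closure fun k hk => hω k (List.mem_of_mem_eraseIdx hk),
    hred.eq ▸ length_wordProd_eraseIdx_lt hj, heq⟩

theorem isRightInversion_or_exists_length_lt {w g t : W} (h : cs.IsRightInversion (w * g) t) :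
    cs.IsRightInversion g t ∨ ∃ w', cs.length w' < cs.length w ∧ w * g * t = w' * g := by
  have hw : w ∈ Subgroup.closure (Set.range cs.simple) :=
    cs.subgroup_closure_range_simple ▸ Subgroup.mem_top w
  exact (isRightInversion_or_exists_mem_closure subset_rfl hw h).imp_right
    fun ⟨w', _, hw'⟩ => ⟨w', hw'⟩

theorem isReflection_of_mem (hX : X ⊆ Set.range cs.simple) {s : W} (hs : s ∈ X) :
    cs.IsReflection s := by
  obtain ⟨i, rfl⟩ := hX hs
  exact cs.isReflection_simple i

theorem length_of_mem (hX : X ⊆ Set.range cs.simple) {s : W} (hs : s ∈ X) : cs.length s = 1 := by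
  obtain ⟨i, rfl⟩ := hX hs
  exact cs.length_simple i

end Parabolic

/-! ### Longest elements -/

section Longest

variable {X : Set W} {w w' : W}

/-- `w` is an element of maximal length of the subgroup `G`. -/
def IsLongest (cs : CoxeterSystem M W) (G : Subgroup W) (w : W) : Prop :=
  w ∈ G ∧ ∀ u ∈ G, cs.length u ≤ cs.length w

theorem length_mul_inv_add_length (hX : X ⊆ Set.range cs.simple) {z : W}
    (hz : ∀ s ∈ X, cs.length (z * s) < cs.length z) {u : W} (hu : u ∈ Subgroup.closure X) :
    cs.length (z * u⁻¹) + cs.length u = cs.length z := by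
  induction hu using parabolic_induction hX with
  | one => simp
  | mul_simple v _ s hs hlength ih =>
    have ht := isReflection_of_mem hX hs
    have hinv : cs.IsRightInversion (z * v⁻¹ * v) s := by simpa using ⟨ht, hz s hs⟩
    obtain ⟨-, hlt⟩ | ⟨x, hx, heq⟩ := isRightInversion_or_exists_length_lt hinv
    · lia
    · have hzx : z * (v * s)⁻¹ = x := by
        rw [mul_inv_rev, ht.inv, ← mul_assoc, mul_inv_eq_iff_eq_mul]
        simpa using heq
      have := cs.length_le_length_mul_add_right z (v * s)⁻¹
      rw [length_inv] at this
      rw [hzx] at this ⊢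
      lia

theorem IsLongest.length_mul_lt (hX : X ⊆ Set.range cs.simple)
    (hw : IsLongest cs (Subgroup.closure X) w) {s : W} (hs : s ∈ X) :
    cs.length (w * s) < cs.length w :=
  (hw.2 _ (mul_mem hw.1 (Subgroup.subset_closure hs))).lt_of_ne
    ((isReflection_of_mem hX hs).length_mul_left_ne w)

theorem IsLongest.eq (hX : X ⊆ Set.range cs.simple) (hw : IsLongest cs (Subgroup.closure X) w)
    (hw' : IsLongest cs (Subgroup.closure X) w') : w = w' := by
  have h := length_mul_inv_add_length hX (fun s hs => hw.length_mul_lt hX hs) hw'.1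
  have hle := hw'.2 w hw.1
  rw [← mul_inv_eq_one, ← cs.length_eq_zero_iff]
  lia

theorem IsLongest.inv {G : Subgroup W} (hw : IsLongest cs G w) : IsLongest cs G w⁻¹ :=
  ⟨inv_mem hw.1, by simpa using hw.2⟩

end Longest

/-! ### Minimal coset representatives -/

section MinCosetRep

variable {X Y : Set W} {x b g u v y : W}

/-- `x` is an element of minimal length of the coset `xG`; representatives of minimal length of
cosets `Gx` are described by applying this notion to `x⁻¹`. -/
def IsMinCosetRep (cs : CoxeterSystem M W) (G : Subgroup W) (x : W) : Prop :=
  ∀ u ∈ G, cs.length x ≤ cs.length (x * u)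

namespace IsMinCosetRep

theorem length_mul (hX : X ⊆ Set.range cs.simple) (hx : IsMinCosetRep cs (Subgroup.closure X) x)
    (hu : u ∈ Subgroup.closure X) : cs.length (x * u) = cs.length x + cs.length u := by
  induction hu using parabolic_induction hX with
  | one => simp
  | mul_simple v hv s hs hlength ih =>
    by_contra hne
    have ht := isReflection_of_mem hX hs
    have hinv : cs.IsRightInversion (x * v) s := by
      refine ⟨ht, ?_⟩
      obtain ⟨i, rfl⟩ := hX hs
      rw [← mul_assoc] at hne
      have := cs.length_mul_simple (x * v) i
      lia
    obtain ⟨-, hlt⟩ | ⟨x', hx', heq⟩ := isRightInversion_or_exists_length_lt hinv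
    · lia
    · have hmin := hx _ (mul_mem (mul_mem hv (Subgroup.subset_closure hs)) (inv_mem hv))
      rw [← mul_inv_eq_iff_eq_mul] at heq
      rw [show x * (v * s * v⁻¹) = x' by simpa [mul_assoc] using heq] at hmin
      lia

theorem length_mul_of_inv (hX : X ⊆ Set.range cs.simple)
    (hx : IsMinCosetRep cs (Subgroup.closure X) x⁻¹) (hu : u ∈ Subgroup.closure X) :
    cs.length (u * x) = cs.length u + cs.length x := by
  have h := hx.length_mul hX (inv_mem hu)
  rwa [← mul_inv_rev, length_inv, length_inv, length_inv, add_comm] at h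

theorem not_isRightInversion (hb : IsMinCosetRep cs (Subgroup.closure X) b) {s : W} (hs : s ∈ X) :
    ¬ cs.IsRightInversion b s :=
  fun h => h.2.not_ge (hb s (Subgroup.subset_closure hs))

theorem exists_eq_mul (hX : X ⊆ Set.range cs.simple) (hY : Y ⊆ Set.range cs.simple)
    (hb : IsMinCosetRep cs (Subgroup.closure X) b) (hg : IsMinCosetRep cs (Subgroup.closure X) g)
    (hv : v ∈ Subgroup.closure X) (hu : u ∈ Subgroup.closure Y) (h : g * v = u * b) :
    ∃ u' ∈ Subgroup.closure Y, g = u' * b := by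
  induction hv using parabolic_induction hX generalizing u with
  | one => exact ⟨u, hu, by simpa using h⟩
  | mul_simple v hv s hs hlength ih =>
    have ht := isReflection_of_mem hX hs
    have hgv : u * b * s = g * v := by rw [← h, mul_assoc, mul_assoc, ht.mul_self, mul_one]
    have hinv : cs.IsRightInversion (u * b) s := by
      refine ⟨ht, ?_⟩
      rw [hgv, ← h, hg.length_mul hX hv,
        hg.length_mul hX (mul_mem hv (Subgroup.subset_closure hs)), hlength]
      lia
    obtain hbs | ⟨u', hu', -, heq⟩ := isRightInversion_or_exists_mem_closure hY hu hinv
    · exact (hb.not_isRightInversion hs hbs).elim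
    · exact ih hu' (hgv.symm.trans heq)

theorem eq_of_length_le (hX : X ⊆ Set.range cs.simple) (hY : Y ⊆ Set.range cs.simple)
    (hb : IsMinCosetRep cs (Subgroup.closure X) b)
    (hb' : IsMinCosetRep cs (Subgroup.closure Y) b⁻¹)
    (hg : IsMinCosetRep cs (Subgroup.closure X) g) (hv : v ∈ Subgroup.closure X)
    (hu : u ∈ Subgroup.closure Y) (h : g * v = u * b) (hle : cs.length g ≤ cs.length b) :
    g = b := by
  obtain ⟨u', hu', rfl⟩ := hb.exists_eq_mul hX hY hg hv hu h
  rw [hb'.length_mul_of_inv hY hu'] at hle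
  rw [cs.length_eq_zero_iff.1 (show cs.length u' = 0 by lia), one_mul]

/-- The nontrivial inclusion in Kilmoyer's theorem on `W_X ∩ b⁻¹ W_Y b`. -/
theorem mem_closure_of_conj_mem (hX : X ⊆ Set.range cs.simple) (hY : Y ⊆ Set.range cs.simple)
    (hb : IsMinCosetRep cs (Subgroup.closure X) b)
    (hb' : IsMinCosetRep cs (Subgroup.closure Y) b⁻¹)
    (hy : y ∈ Subgroup.closure X) (h : b * y * b⁻¹ ∈ Subgroup.closure Y) :
    y ∈ Subgroup.closure {s ∈ X | b * s * b⁻¹ ∈ Y} := by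
  induction hy using parabolic_induction hX with
  | one => exact one_mem _
  | mul_simple v hv s hs hlength ih =>
    have ht := isReflection_of_mem hX hs
    have hconj : b * (v * s) * b⁻¹ * b * s = b * v := by simp [mul_assoc, ht.mul_self]
    have hinv : cs.IsRightInversion (b * (v * s) * b⁻¹ * b) s := by
      refine ⟨ht, ?_⟩
      rw [hconj, inv_mul_cancel_right, hb.length_mul hX hv,
        hb.length_mul hX (mul_mem hv (Subgroup.subset_closure hs)), hlength]
      lia
    obtain hbs | ⟨u, hu, -, heq⟩ := isRightInversion_or_exists_mem_closure hY h hinv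
    · exact (hb.not_isRightInversion hs hbs).elim
    have hbv : b * v * b⁻¹ ∈ Subgroup.closure Y := by
      rwa [mul_inv_eq_of_eq_mul (hconj.symm.trans heq)]
    have hbs : b * s * b⁻¹ ∈ Subgroup.closure Y := by
      simpa [mul_assoc] using mul_mem (inv_mem hbv) h
    have hlength_bs : cs.length (b * s * b⁻¹) = 1 := by
      have hadd := hb'.length_mul_of_inv hY hbs
      rw [inv_mul_cancel_right, hb.length_mul hX (Subgroup.subset_closure hs),
        length_of_mem hX hs] at hadd
      lia
    exact mul_mem (ih hbv) (Subgroup.subset_closure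
      ⟨hs, mem_of_mem_closure_of_length_eq_one hY hbs hlength_bs⟩)

end IsMinCosetRep

end MinCosetRep

theorem length_map_le {φ : W →* W} (hφ : ∀ s ∈ Set.range cs.simple, φ s ∈ Set.range cs.simple)
    (w : W) : cs.length (φ w) ≤ cs.length w := by
  obtain ⟨ω, hred, rfl⟩ := cs.exists_isReduced w
  rw [hred.eq]
  clear hred
  induction ω with
  | nil => simp
  | cons i ω ih =>
    rw [wordProd_cons, map_mul, List.length_cons]
    have := cs.length_mul_le (φ (cs.simple i)) (φ (cs.wordProd ω))
    have := length_of_mem subset_rfl (hφ _ ⟨i, rfl⟩)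
    lia

end CoxeterGroup

/-! ### The affine setting -/

namespace AffineData

variable {cs : CoxeterSystem M W} (D : AffineData cs) {μ b g u v z : W}

theorem Jset_subset : D.Jset ⊆ Set.range cs.simple := Set.sdiff_subset

theorem isLongest_wJ : IsLongest cs D.WJ D.wJ := ⟨D.hwJ_mem, D.hwJ_max⟩

theorem wJ_mem : D.wJ ∈ D.WJ := D.hwJ_mem

theorem wJ_inv : D.wJ⁻¹ = D.wJ := D.isLongest_wJ.inv.eq D.Jset_subset D.isLongest_wJ

theorem wJ_mul_cancel_left (w : W) : D.wJ * (D.wJ * w) = w := by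
  simpa only [D.wJ_inv] using inv_mul_cancel_left D.wJ w

theorem length_st (w : W) : cs.length (D.st w) = cs.length w := by
  have hle : ∀ w, cs.length (D.st w) ≤ cs.length w := length_map_le (φ := D.st.toMonoidHom) D.hst_S
  exact (hle w).antisymm (by simpa [D.hst_inv] using hle (D.st w))

theorem st_mem_WJ (hu : u ∈ D.WJ) : D.st u ∈ D.WJ := by
  rw [D.hst_J u hu]
  exact mul_mem (mul_mem D.wJ_mem hu) D.wJ_mem

theorem st_mem_Jset {s : W} (hs : s ∈ D.Jset) : D.st s ∈ D.Jset :=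
  mem_of_mem_closure_of_length_eq_one D.Jset_subset (D.st_mem_WJ (Subgroup.subset_closure hs))
    (by rw [length_st, length_of_mem D.Jset_subset hs])

theorem st_of_mem_Lam (hμ : μ ∈ D.Lam) : D.st μ = D.wJ * μ⁻¹ * D.wJ := by
  simp [D.hst_Lam μ hμ, D.wJ_inv, mul_assoc]

theorem IsDominant.isMinCosetRep {D : AffineData cs} (hμ : D.IsDominant μ) :
    IsMinCosetRep cs D.WJ μ := by
  intro u hu
  have hadd := hμ.2
  have hle := cs.length_mul_le (μ * u) (u⁻¹ * D.wJ)
  have hmax := D.isLongest_wJ.2 _ (mul_mem (inv_mem hu) D.wJ_mem)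
  rw [mul_assoc, mul_inv_cancel_left] at hle
  lia

/-- `b` is an element of minimal length of its double coset `W_J b W_J`. -/
def IsMinDCosetRep (b : W) : Prop := ∀ u ∈ D.WJ, ∀ v ∈ D.WJ, cs.length b ≤ cs.length (u * b * v)

namespace IsMinDCosetRep

variable {D}

theorem of_mem_DCoset (hb : b ∈ D.DCoset μ)
    (hmin : ∀ y ∈ D.DCoset μ, cs.length b ≤ cs.length y) : D.IsMinDCosetRep b := by
  obtain ⟨u, hu, v, hv, rfl⟩ := hb
  exact fun u' hu' v' hv' => hmin _
    ⟨u' * u, mul_mem hu' hu, v * v', mul_mem hv hv', by simp only [mul_assoc]⟩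

theorem isMinCosetRep (hb : D.IsMinDCosetRep b) : IsMinCosetRep cs D.WJ b := fun u hu => by
  simpa using hb 1 (one_mem _) u hu

theorem inv (hb : D.IsMinDCosetRep b) : D.IsMinDCosetRep b⁻¹ := fun u hu v hv => by
  rw [length_inv, ← cs.length_inv (u * b⁻¹ * v)]
  simpa [mul_assoc] using hb v⁻¹ (inv_mem hv) u⁻¹ (inv_mem hu)

theorem st (hb : D.IsMinDCosetRep b) : D.IsMinDCosetRep (D.st b) := fun u hu v hv => by
  rw [length_st, ← D.length_st (u * D.st b * v), map_mul, map_mul, D.hst_inv]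
  exact hb _ (D.st_mem_WJ hu) _ (D.st_mem_WJ hv)

theorem eq_of_mul_eq_mul (hb : D.IsMinDCosetRep b) (hg : D.IsMinDCosetRep g)
    (hu : u ∈ D.WJ) (hv : v ∈ D.WJ) (h : g * v = u * b) : g = b := by
  refine hb.isMinCosetRep.eq_of_length_le D.Jset_subset D.Jset_subset hb.inv.isMinCosetRep
    hg.isMinCosetRep hv hu h ?_
  simpa [mul_assoc, h] using hg u⁻¹ (inv_mem hu) v hv

theorem st_eq_inv (hb : D.IsMinDCosetRep b) (hμ : μ ∈ D.Lam) (hmem : b ∈ D.DCoset μ) :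
    D.st b = b⁻¹ := by
  obtain ⟨u, hu, v, hv, hbμ⟩ := hmem
  have h : (D.st b)⁻¹ * (D.st u * D.wJ * v) = (D.st v)⁻¹ * D.wJ * u⁻¹ * b := by
    rw [hbμ, map_mul, map_mul, D.st_of_mem_Lam hμ]
    simp [mul_assoc, D.wJ_inv, D.wJ_mul_cancel_left]
  exact inv_eq_iff_eq_inv.mp (hb.eq_of_mul_eq_mul hb.st.inv
    (mul_mem (mul_mem (inv_mem (D.st_mem_WJ hv)) D.wJ_mem) (inv_mem hu))
    (mul_mem (mul_mem (D.st_mem_WJ hu) D.wJ_mem) hv) h)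

end IsMinDCosetRep

theorem Hstar_eq (hb : D.st b = b⁻¹) : D.Hstar b = {s ∈ D.Jset | b * s * b⁻¹ ∈ D.Jset} := by
  ext s
  constructor
  · rintro ⟨_, ⟨hs, s', hs', rfl⟩, rfl⟩
    exact ⟨D.st_mem_Jset hs, by simpa [hb, mul_assoc] using D.st_mem_Jset hs'⟩
  · rintro ⟨hs, hs'⟩
    refine ⟨D.st s, ⟨D.st_mem_Jset hs, _, D.st_mem_Jset hs', ?_⟩, D.hst_inv s⟩
    simp [hb, mul_assoc]

theorem WHstar_le_WJ (hb : D.st b = b⁻¹) : D.WHstar b ≤ D.WJ := by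
  rw [WHstar, D.Hstar_eq hb]
  exact Subgroup.closure_mono (Set.sep_subset _ _)

theorem conj_mem_WJ (hb : D.st b = b⁻¹) (hz : z ∈ D.WHstar b) : b * z * b⁻¹ ∈ D.WJ := by
  suffices h : D.WHstar b ≤ D.WJ.comap (MulAut.conj b).toMonoidHom from h hz
  rw [WHstar, D.Hstar_eq hb]
  exact (Subgroup.closure_le _).2 fun s hs => Subgroup.subset_closure hs.2

theorem inv_mul_st_mul_mem_WJ (hb : D.st b = b⁻¹) (hz : z ∈ D.WHstar b) :
    b⁻¹ * D.st z * b ∈ D.WJ := by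
  simpa [hb] using D.st_mem_WJ (D.conj_mem_WJ hb hz)

theorem length_le_length_wJ_mul_inv {D : AffineData cs} (hμ : D.IsDominant (v * b))
    (hb : IsMinCosetRep cs D.WJ b⁻¹) (hv : v ∈ D.WJ) (hu : u ∈ D.WJ) (hbu : b * u * b⁻¹ ∈ D.WJ) :
    cs.length u ≤ cs.length (D.wJ * v⁻¹) := by
  have hadd := hμ.isMinCosetRep.length_mul D.Jset_subset hu
  rw [hb.length_mul_of_inv D.Jset_subset hv,
    show v * b * u = v * (b * u * b⁻¹) * b by simp [mul_assoc],
    hb.length_mul_of_inv D.Jset_subset (mul_mem hv hbu)] at hadd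
  have hmax := D.isLongest_wJ.2 _ (mul_mem hv hbu)
  have hsub := cs.length_le_length_mul_add_right D.wJ v⁻¹
  rw [length_inv] at hsub
  lia

theorem exists_isLongest_WHstar {D : AffineData cs} (hμ : D.IsDominant μ)
    (hb : D.IsMinDCosetRep b) (hmem : b ∈ D.DCoset μ) :
    ∃ y, IsLongest cs (D.WHstar b) y ∧ D.wJ * μ = b * y := by
  have hst := hb.st_eq_inv hμ.1 hmem
  obtain ⟨u, hu, v', hv', hbμ⟩ := hmem
  obtain ⟨v, hv, rfl⟩ := hb.isMinCosetRep.exists_eq_mul D.Jset_subset D.Jset_subset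
    hμ.isMinCosetRep hv' (inv_mem hu) (show μ * v' = u⁻¹ * b by simp [hbμ, mul_assoc])
  have heq : D.wJ * (v * b) = b * (D.wJ * v⁻¹) := by
    have h := D.st_of_mem_Lam hμ.1
    rw [map_mul, D.hst_J v hv, hst] at h
    refine inv_injective ?_
    simpa [mul_assoc, D.wJ_inv] using h.symm
  have hy : D.wJ * v⁻¹ ∈ D.WHstar b := by
    rw [WHstar, D.Hstar_eq hst]
    refine hb.isMinCosetRep.mem_closure_of_conj_mem D.Jset_subset D.Jset_subset
      hb.inv.isMinCosetRep (mul_mem D.wJ_mem (inv_mem hv)) ?_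
    rw [← heq, mul_assoc, mul_inv_cancel_right]
    exact mul_mem D.wJ_mem hv
  exact ⟨_, ⟨hy, fun w hw => length_le_length_wJ_mul_inv hμ hb.inv.isMinCosetRep hv
    (D.WHstar_le_WJ hst hw) (D.conj_mem_WJ hst hw)⟩, heq⟩

theorem conj_eq_of_mem_WJ (hμ : μ ∈ D.Lam) (hz : z ∈ D.WJ) (h : μ⁻¹ * z * μ ∈ D.WJ) :
    μ⁻¹ * z * μ = z := by
  have hmem := mul_mem (D.hLam_normal.conj_mem _ (inv_mem hμ) z) hμ
  exact (D.hs0_hyper z).unique ⟨h, by simpa [mul_assoc] using hmem⟩ ⟨hz, by simp [one_mem]⟩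

end AffineData

/-- For every `y ∈ W_{H*}`, one has `b⁻¹ y* b = w_{H*} y w_{H*}`.  In
particular the map `ε : y ↦ b⁻¹ y* b` maps `W_{H*}` to itself and coincides with conjugation
by the longest element `w_{H*}`. -/
theorem eps_eq_conj_wHstar (cs : CoxeterSystem M W) (D : AffineData cs)
    (mu b wHs : W) (hmu : D.IsDominant mu)
    (hb_mem : b ∈ D.DCoset mu)
    (hb_min : ∀ y ∈ D.DCoset mu, cs.length b ≤ cs.length y)
    (hwHs_mem : wHs ∈ D.WHstar b)
    (hwHs_max : ∀ u ∈ D.WHstar b, cs.length u ≤ cs.length wHs) :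
    ∀ y ∈ D.WHstar b, b⁻¹ * D.st y * b = wHs * y * wHs := by
  intro z hz
  have hb : D.IsMinDCosetRep b := .of_mem_DCoset hb_mem hb_min
  have hst : D.st b = b⁻¹ := hb.st_eq_inv hmu.1 hb_mem
  have hHstar : D.Hstar b ⊆ Set.range cs.simple :=
    (D.Hstar_eq hst).trans_subset ((Set.sep_subset _ _).trans D.Jset_subset)
  have hwHs : IsLongest cs (D.WHstar b) wHs := ⟨hwHs_mem, hwHs_max⟩
  obtain ⟨y, hy, hfactor⟩ := AffineData.exists_isLongest_WHstar hmu hb hb_mem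
  obtain rfl : y = wHs := hy.eq hHstar hwHs
  have hinv : y⁻¹ = y := hy.inv.eq hHstar hy
  have hconj : b⁻¹ * D.st z * b = y * (mu⁻¹ * z * mu) * y := by
    rw [D.hst_J z (D.WHstar_le_WJ hst hz), eq_mul_inv_of_mul_eq hfactor.symm, hinv]
    simp [mul_assoc, D.wJ_inv, hinv, D.wJ_mul_cancel_left]
  have hmem : mu⁻¹ * z * mu ∈ D.WJ := by
    have hyJ := D.WHstar_le_WJ hst hy.1
    rw [← Subgroup.mul_mem_cancel_left _ hyJ, ← Subgroup.mul_mem_cancel_right _ hyJ, ← hconj]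
    exact D.inv_mul_st_mul_mem_WJ hst hz
  rw [hconj, D.conj_eq_of_mem_WJ hmu.1 (D.WHstar_le_WJ hst hz) hmem]

end LY
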